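/- Let λ ∈ [1/3, 1/2) and let K ⊂ ℝ² be a nonempty compact set satisfying K = F₁(K) ∪ F₂(K) ∪ F₃(K) ∪ F₄(K), where F₁,…,F₄ are the similarity maps of the von Koch curve with parameter λ. Then the Hausdorff dimension of K satisfies dim_H(K) = −log 4 / log λ, and moreover −log 4 / log λ ≥ 2 − (4/log 2)·(1/2 − λ). -/

import Mathlib

open Metric Set MeasureTheory

noncomputable section

abbrev Plane := EuclideanSpace ℝ (Fin 2)

/-- An open axis-parallel cube in `ℝ^d` with side length `s`. -/
def IsCube {d : ℕ} (Q : Set (EuclideanSpace ℝ (Fin d))) (s : ℝ) : Prop :=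
  0 < s ∧ ∃ c : Fin d → ℝ, Q = {x | ∀ i, x i ∈ Set.Ioo (c i) (c i + s)}

/-- The curve condition with exponent `p` and constant `C`: any two points of the
complement of `Ω` can be joined by a unit-speed (1-Lipschitz) curve in the complement
along which the arclength integral of `dist(·, ∂Ω)^(1-p)` is at most `C‖z₁-z₂‖^(2-p)`. -/
def CurveCondition (Ω : Set Plane) (p C : ℝ) : Prop :=
  ∀ z₁ ∈ Ωᶜ, ∀ z₂ ∈ Ωᶜ, ∃ (L : ℝ) (γ : ℝ → Plane), 0 ≤ L ∧
    LipschitzOnWith 1 γ (Set.Icc 0 L) ∧ γ 0 = z₁ ∧ γ L = z₂ ∧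
    (∀ t ∈ Set.Icc (0:ℝ) L, γ t ∈ Ωᶜ) ∧
    (∫ t in (0:ℝ)..L, Metric.infDist (γ t) (frontier Ω) ^ (1 - p)) ≤ C * ‖z₁ - z₂‖ ^ (2 - p)

/-- `Ω` is a `J`-John domain: there is a center `x₀` such that every point can be joined
to `x₀` by a unit-speed (1-Lipschitz) curve `γ` in `Ω` with `dist(γ t, ∂Ω) ≥ J·t`. -/
def IsJohnDomain (Ω : Set Plane) (J : ℝ) : Prop :=
  ∃ x₀ ∈ Ω, ∀ x ∈ Ω, ∃ (ℓ : ℝ) (γ : ℝ → Plane), 0 ≤ ℓ ∧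
    LipschitzOnWith 1 γ (Set.Icc 0 ℓ) ∧ γ 0 = x ∧ γ ℓ = x₀ ∧
    (∀ t ∈ Set.Icc (0:ℝ) ℓ, γ t ∈ Ω ∧ J * t ≤ Metric.infDist (γ t) (frontier Ω))

/-- `Ω` is a Jordan domain: a bounded domain whose boundary is a homeomorphic
image of the circle. -/
def IsJordanDomain (Ω : Set Plane) : Prop :=
  IsOpen Ω ∧ IsConnected Ω ∧ Bornology.IsBounded Ω ∧
  ∃ f : (Metric.sphere (0 : Plane) 1) → Plane,
    Continuous f ∧ Function.Injective f ∧ Set.range f = frontier Ω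

/-- `E` is weakly mean porous with parameters `(α, lam)`: there is a pairwise disjoint
collection `D` of open cubes in the complement of `E` and a `j₀` such that for every
`x ∈ E` and `j ≥ j₀`, more than half of the scales `k ∈ {1,…,j}` admit at least `lam k`
cubes of `D` of side length at least `α(2^(-k))` inside the annulus
`B(x,2^(-k)) ∖ B(x,2^(-k-1))`. -/
def WeaklyMeanPorous {d : ℕ} (E : Set (EuclideanSpace ℝ (Fin d)))
    (α : ℝ → ℝ) (lam : ℕ → ℝ) : Prop :=
  ∃ (D : Set (Set (EuclideanSpace ℝ (Fin d)))) (j₀ : ℕ), 0 < j₀ ∧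
    (∀ Q ∈ D, (∃ s, IsCube Q s) ∧ Q ⊆ Eᶜ) ∧ D.Pairwise Disjoint ∧
    ∀ x ∈ E, ∀ j : ℕ, j₀ ≤ j →
      (j : ℝ) / 2 < ({k : ℕ | k ∈ Finset.Icc 1 j ∧
        ∃ S : Finset (Set (EuclideanSpace ℝ (Fin d))), lam k ≤ S.card ∧
          ∀ Q ∈ S, Q ∈ D ∧
            Q ⊆ Metric.ball x ((2:ℝ) ^ (-(k:ℝ))) \ Metric.ball x ((2:ℝ) ^ (-(k:ℝ) - 1)) ∧
            ∃ s, α ((2:ℝ) ^ (-(k:ℝ))) ≤ s ∧ IsCube Q s}).ncard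

/-- The point `(a,b)` of the Euclidean plane. -/
def pt (a b : ℝ) : Plane := (WithLp.equiv 2 (Fin 2 → ℝ)).symm ![a, b]

/-- Rotation of the plane by angle `τ` about the origin. -/
def rot (τ : ℝ) (x : Plane) : Plane :=
  pt (Real.cos τ * x 0 - Real.sin τ * x 1) (Real.sin τ * x 0 + Real.cos τ * x 1)

/-- The angle `θ ∈ (0,π)` with `cos θ = (1/2 - l)/l`. -/
def kochAngle (l : ℝ) : ℝ := Real.arccos ((1/2 - l) / l)

/-- The similarity maps `F₁, F₂, F₃, F₄` of the von Koch curve with parameter `l`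
(here `h = √(l - 1/4)`). -/
def kochF (l : ℝ) : Fin 4 → Plane → Plane :=
  ![fun x => l • x,
    fun x => rot (kochAngle l) (l • x) + pt l 0,
    fun x => rot (-kochAngle l) (l • x) + pt (1/2) (Real.sqrt (l - 1/4)),
    fun x => l • x + pt (1 - l) 0]

/-- The placement maps `G₁, G₂, G₃` for the snowflake domain. -/
def kochG : Fin 3 → Plane → Plane :=
  ![fun x => x,
    fun x => rot (-(2 * Real.pi / 3)) x + pt 1 0,
    fun x => rot (2 * Real.pi / 3) x + pt (1/2) (-(Real.sqrt 3 / 2))]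

/-- The union of the three placed copies of the Koch curve `K`, forming the
boundary of the snowflake. -/
def snowflakeBoundary (K : Set Plane) : Set Plane :=
  kochG 0 '' K ∪ kochG 1 '' K ∪ kochG 2 '' K

/-! For similarities `f i` of ratios `r i`, let `s` be the exponent with `∑ i, r i ^ s = 1`. The
upper bound comes from covering `K` by its cylinders of level `n`. For the lower bound suppose first
that the pieces `f i '' K` are at mutual distance at least `δ`. Then every finite cover `A` of `K`
satisfies `δ ^ s ≤ ∑ j, ediam (A j) ^ s`, by induction on its size: either one of its sets has
diameter at least `δ`, or each set meets at most one piece, and the cover splits into smaller covers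
of the pieces, which are rescaled to covers of `K`. By compactness this bounds the Hausdorff measure
from below. The open set condition reduces to this separated case, for any exponent below `s`, by
composing all words of a large length with one fixed word that maps `K` into the open set.

For the von Koch maps the open set is the triangle with vertices `(0, 0)`, `(1, 0)`, `(1/2, h)`. In
its barycentric coordinates the four maps have nonnegative coefficients. -/

open Filter Topology
open scoped ENNReal NNReal

section Words

variable {ι X : Type*}

/-- The composition `f (w 0) ∘ f (w 1) ∘ ⋯ ∘ f (w (n - 1))` of the maps of an iterated function
system `f` along a word `w` of length `n`; the images of the attractor under these maps are the
cylinders of level `n`. -/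
def wordMap (f : ι → X → X) : {n : ℕ} → (Fin n → ι) → X → X
  | 0, _ => id
  | _ + 1, w => f (w 0) ∘ wordMap f (Fin.tail w)

lemma wordMap_cons (f : ι → X → X) {n : ℕ} (i : ι) (w : Fin n → ι) :
    wordMap f (Fin.cons i w : Fin (n + 1) → ι) = f i ∘ wordMap f w := by
  simp only [wordMap, Fin.cons_zero, Fin.tail_cons]

lemma mapsTo_wordMap {f : ι → X → X} {S : Set X} (hS : ∀ i, MapsTo (f i) S S) {n : ℕ}
    (w : Fin n → ι) : MapsTo (wordMap f w) S S := by
  induction n with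
  | zero => exact mapsTo_id S
  | succ n ih => exact (hS _).comp (ih _)

lemma iUnion_wordMap_image {f : ι → X → X} {K : Set X} (hK : ⋃ i, f i '' K = K) (n : ℕ) :
    ⋃ w : Fin n → ι, wordMap f w '' K = K := by
  induction n with
  | zero => simp only [wordMap, image_id, iUnion_const]
  | succ n ih =>
    calc ⋃ w : Fin (n + 1) → ι, wordMap f w '' K
        = ⋃ i, ⋃ w : Fin n → ι, f i '' (wordMap f w '' K) := by
          ext x
          simp only [mem_iUnion, Fin.exists_fin_succ_pi, wordMap_cons, image_comp]
      _ = K := by simp only [← image_iUnion, ih, hK]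

lemma pairwise_disjoint_wordMap_image {f : ι → X → X} {U : Set X}
    (hinj : ∀ i, Function.Injective (f i)) (hmaps : ∀ i, MapsTo (f i) U U)
    (hdisj : Pairwise (Function.onFun Disjoint fun i => f i '' U)) (n : ℕ) :
    Pairwise (Function.onFun Disjoint fun w : Fin n → ι => wordMap f w '' U) := by
  induction n with
  | zero => exact fun v w hvw => absurd (Subsingleton.elim v w) hvw
  | succ n ih =>
    intro v w hvw
    simp only [Function.onFun, wordMap, image_comp]
    by_cases h0 : v 0 = w 0
    · have htail : Fin.tail v ≠ Fin.tail w := fun htail =>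
        hvw (by rw [← Fin.cons_self_tail v, ← Fin.cons_self_tail w, h0, htail])
      rw [h0]
      exact (disjoint_image_iff (hinj _)).2 (ih htail)
    · exact (hdisj h0).mono (image_mono (mapsTo_wordMap hmaps _).image_subset)
        (image_mono (mapsTo_wordMap hmaps _).image_subset)

variable [PseudoEMetricSpace X] {f : ι → X → X} {r : ι → ℝ≥0}

lemma lipschitzWith_wordMap (hf : ∀ i, LipschitzWith (r i) (f i)) {n : ℕ} (w : Fin n → ι) :
    LipschitzWith (∏ k, r (w k)) (wordMap f w) := by
  induction n with
  | zero => exact LipschitzWith.id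
  | succ n ih =>
    rw [Fin.prod_univ_succ]
    exact (hf _).comp (ih (Fin.tail w))

lemma antilipschitzWith_wordMap (hf : ∀ i, AntilipschitzWith (r i)⁻¹ (f i)) {n : ℕ}
    (w : Fin n → ι) : AntilipschitzWith (∏ k, r (w k))⁻¹ (wordMap f w) := by
  induction n with
  | zero =>
    rw [Fin.prod_univ_zero, inv_one]
    exact AntilipschitzWith.id
  | succ n ih =>
    rw [Fin.prod_univ_succ, mul_inv, mul_comm]
    exact (hf _).comp (ih (Fin.tail w))

lemma exists_lt_one_forall_prod_le_pow [Finite ι] (hr : ∀ i, r i < 1) :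
    ∃ c < 1, ∀ {n : ℕ} (w : Fin n → ι), ∏ k, r (w k) ≤ c ^ n := by
  have := Fintype.ofFinite ι
  refine ⟨Finset.univ.sup r, (Finset.sup_lt_iff one_pos).2 fun i _ => hr i, fun {n} w => ?_⟩
  simpa only [Finset.card_fin] using Finset.prod_le_pow_card Finset.univ (fun k => r (w k)) _
    fun k _ => Finset.le_sup (f := r) (Finset.mem_univ (w k))

lemma exists_tendsto_zero_forall_ediam_wordMap_image_le [Finite ι] {K : Set X}
    (hf : ∀ i, LipschitzWith (r i) (f i)) (hr : ∀ i, r i < 1) (hK : ediam K ≠ ∞) :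
    ∃ u : ℕ → ℝ≥0∞, Tendsto u atTop (𝓝 0) ∧
      ∀ {n : ℕ} (w : Fin n → ι), ediam (wordMap f w '' K) ≤ u n := by
  obtain ⟨c, hc, hprod⟩ := exists_lt_one_forall_prod_le_pow hr
  refine ⟨fun n => (c : ℝ≥0∞) ^ n * ediam K, ?_, fun w => ?_⟩
  · simpa only [zero_mul] using ENNReal.Tendsto.mul_const
      (ENNReal.tendsto_pow_atTop_nhds_zero_of_lt_one (by exact_mod_cast hc)) (.inr hK)
  · refine ((lipschitzWith_wordMap hf w).ediam_image_le K).trans ?_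
    exact mul_le_mul_left (by exact_mod_cast hprod w) _

lemma exists_wordMap_image_subset [Finite ι] {K U : Set X} {x : X}
    (hf : ∀ i, LipschitzWith (r i) (f i)) (hr : ∀ i, r i < 1) (hK : ediam K ≠ ∞)
    (hKf : ⋃ i, f i '' K = K) (hxK : x ∈ K) (hU : U ∈ 𝓝 x) :
    ∃ (n : ℕ) (w : Fin n → ι), wordMap f w '' K ⊆ U := by
  obtain ⟨ε, hε, hball⟩ := EMetric.mem_nhds_iff.1 hU
  obtain ⟨u, hu, hdiam⟩ := exists_tendsto_zero_forall_ediam_wordMap_image_le hf hr hK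
  obtain ⟨n, hn⟩ := (hu.eventually_lt_const hε).exists
  obtain ⟨w, hxw⟩ := mem_iUnion.1 ((iUnion_wordMap_image hKf n).symm ▸ hxK)
  exact ⟨n, w, fun y hy => hball ((edist_le_ediam_of_mem hy hxw).trans_lt ((hdiam w).trans_lt hn))⟩

end Words

section UpperBound

variable {ι X : Type*} [Fintype ι] [EMetricSpace X] {f : ι → X → X} {r : ι → ℝ≥0} {K : Set X}

lemma sum_ediam_wordMap_image_rpow_le (hf : ∀ i, LipschitzWith (r i) (f i)) {s : ℝ} (hs : 0 ≤ s)
    (hsum : ∑ i, r i ^ s ≤ 1) (n : ℕ) :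
    ∑ w : Fin n → ι, ediam (wordMap f w '' K) ^ s ≤ ediam K ^ s := by
  calc ∑ w : Fin n → ι, ediam (wordMap f w '' K) ^ s
      ≤ ∑ w : Fin n → ι, ((∏ k, r (w k) ^ s : ℝ≥0) : ℝ≥0∞) * ediam K ^ s := by
        gcongr with w
        rw [NNReal.finsetProd_rpow, ENNReal.coe_rpow_of_nonneg _ hs,
          ← ENNReal.mul_rpow_of_nonneg _ _ hs]
        gcongr
        exact (lipschitzWith_wordMap hf w).ediam_image_le K
    _ = ((∑ i, r i ^ s) ^ n : ℝ≥0) * ediam K ^ s := by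
        rw [← Finset.sum_mul, Fintype.sum_pow, ENNReal.ofNNReal_finsetSum]
    _ ≤ ediam K ^ s :=
        mul_le_of_le_one_left' (by exact_mod_cast pow_le_one₀ (zero_le) hsum)

theorem dimH_le_of_sum_rpow_le_one (hf : ∀ i, LipschitzWith (r i) (f i)) (hr : ∀ i, r i < 1)
    (hK : ediam K ≠ ∞) (hKf : ⋃ i, f i '' K = K) {s : ℝ≥0} (hsum : ∑ i, r i ^ (s : ℝ) ≤ 1) :
    dimH K ≤ s := by
  borelize X
  obtain ⟨u, hu, hdiam⟩ := exists_tendsto_zero_forall_ediam_wordMap_image_le hf hr hK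
  have hmeasure : μH[s] K ≤ ediam K ^ (s : ℝ) := by
    refine (Measure.hausdorffMeasure_le_liminf_sum _ K u hu
      (fun n (w : Fin n → ι) => wordMap f w '' K) (.of_forall fun _ => hdiam)
      (.of_forall fun n => (iUnion_wordMap_image hKf n).ge)).trans ?_
    exact (liminf_le_liminf (.of_forall
      (sum_ediam_wordMap_image_rpow_le hf s.coe_nonneg hsum))).trans (liminf_const _).le
  exact dimH_le_of_hausdorffMeasure_ne_top
    (ne_top_of_le_ne_top (ENNReal.rpow_ne_top_of_nonneg s.coe_nonneg hK) hmeasure)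

end UpperBound

section LowerBound

lemma exists_isOpen_superset_ediam_rpow_le {X : Type*} [PseudoEMetricSpace X] {S : Set X}
    (hS : ediam S ≠ ∞) {s : ℝ} (hs : 0 ≤ s) {ε : ℝ≥0∞} (hε : ε ≠ 0) :
    ∃ V, IsOpen V ∧ S ⊆ V ∧ ediam V ^ s ≤ ediam S ^ s + ε := by
  have hlim : Tendsto (fun η : ℝ≥0 => (ediam S + 2 * (η : ℝ≥0∞)) ^ s) (𝓝[>] 0)
      (𝓝 (ediam S ^ s)) := by
    have hcont : Continuous fun η : ℝ≥0 => (ediam S + 2 * (η : ℝ≥0∞)) ^ s :=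
      ENNReal.continuous_rpow_const.comp (continuous_const.add
        ((ENNReal.continuous_const_mul ENNReal.ofNat_ne_top).comp ENNReal.continuous_coe))
    simpa using (hcont.tendsto 0).mono_left nhdsWithin_le_nhds
  have hlt : ediam S ^ s < ediam S ^ s + ε :=
    ENNReal.lt_add_right (ENNReal.rpow_ne_top_of_nonneg hs hS) hε
  obtain ⟨η, hη, hη0⟩ := ((hlim.eventually_lt_const hlt).and self_mem_nhdsWithin).exists
  refine ⟨thickening η S, isOpen_thickening, self_subset_thickening (by exact_mod_cast hη0) S,
    (ENNReal.rpow_le_rpow (ediam_thickening_le η) hs).trans hη.le⟩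

theorem le_hausdorffMeasure_of_forall_finset_cover {X : Type*} [EMetricSpace X]
    [MeasurableSpace X] [BorelSpace X] {K : Set X} (hK : IsCompact K) {s : ℝ} (hs : 0 < s)
    {c : ℝ≥0∞}
    (hc : ∀ (J : Finset ℕ) (A : ℕ → Set X), K ⊆ ⋃ j ∈ J, A j → c ≤ ∑ j ∈ J, ediam (A j) ^ s) :
    c ≤ μH[s] K := by
  rw [Measure.hausdorffMeasure_apply]
  refine le_iSup₂_of_le 1 one_pos (le_iInf fun A => le_iInf₂ fun hcover hdiam => ?_)
  have hterm (n : ℕ) : ⨆ _ : (A n).Nonempty, ediam (A n) ^ s = ediam (A n) ^ s := by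
    rcases (A n).eq_empty_or_nonempty with h | h
    · simp [h, ENNReal.zero_rpow_of_pos hs]
    · simp [h]
  simp only [hterm]
  refine ENNReal.le_of_forall_pos_le_add fun ε hε _ => ?_
  obtain ⟨ε', hε', hsum⟩ := ENNReal.exists_pos_sum_of_countable' (ENNReal.coe_pos.2 hε).ne' ℕ
  choose V hVopen hAV hVdiam using fun n => exists_isOpen_superset_ediam_rpow_le
    (ne_top_of_le_ne_top ENNReal.one_ne_top (hdiam n)) hs.le (hε' n).ne'
  obtain ⟨J, hJ⟩ := hK.elim_finite_subcover V hVopen (hcover.trans (iUnion_mono hAV))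
  calc c ≤ ∑ j ∈ J, ediam (V j) ^ s := hc J V hJ
    _ ≤ ∑ j ∈ J, (ediam (A j) ^ s + ε' j) := Finset.sum_le_sum fun j _ => hVdiam j
    _ ≤ ∑' n, (ediam (A n) ^ s + ε' n) := ENNReal.sum_le_tsum J
    _ ≤ ∑' n, ediam (A n) ^ s + ε := by
        rw [ENNReal.tsum_add]
        gcongr

lemma mul_ediam_preimage_rpow_le {X Y : Type*} [PseudoEMetricSpace X]
    [PseudoEMetricSpace Y] {g : X → Y} {c : ℝ≥0} (hg : AntilipschitzWith c⁻¹ g) (hc : 0 < c)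
    (A : Set Y) {s : ℝ} (hs : 0 ≤ s) :
    (c : ℝ≥0∞) ^ s * ediam (g ⁻¹' A) ^ s ≤ ediam A ^ s := by
  rw [← ENNReal.mul_rpow_of_nonneg _ _ hs]
  gcongr
  calc (c : ℝ≥0∞) * ediam (g ⁻¹' A) ≤ c * ((c⁻¹ : ℝ≥0) * ediam A) := by
        gcongr
        exact hg.ediam_preimage_le A
    _ = ediam A := by
        rw [← mul_assoc, ← ENNReal.coe_mul, mul_inv_cancel₀ hc.ne', ENNReal.coe_one, one_mul]

open Classical in
lemma pairwise_disjoint_filter_of_ediam_lt {ι X α : Type*} [PseudoEMetricSpace X] {S : ι → Set X}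
    {δ : ℝ≥0∞} (hsep : ∀ i j, i ≠ j → ∀ x ∈ S i, ∀ y ∈ S j, δ ≤ edist x y) {J : Finset α}
    {A : α → Set X} (hA : ∀ j ∈ J, ediam (A j) < δ) :
    Pairwise (Function.onFun Disjoint fun i => {j ∈ J | (A j ∩ S i).Nonempty}) := by
  refine fun i i' hii' => Finset.disjoint_left.2 fun j hj hj' => ?_
  obtain ⟨hjJ, x, hxA, hxS⟩ := Finset.mem_filter.1 hj
  obtain ⟨-, y, hyA, hyS⟩ := Finset.mem_filter.1 hj'
  exact (hA j hjJ).not_ge ((hsep i i' hii' x hxS y hyS).trans (edist_le_ediam_of_mem hxA hyA))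

lemma exists_pos_forall_le_edist_of_pairwise_disjoint {ι X : Type*} [Finite ι] [EMetricSpace X]
    {C : ι → Set X} (hC : ∀ i, IsCompact (C i)) (hdisj : Pairwise (Function.onFun Disjoint C)) :
    ∃ δ : ℝ≥0, 0 < δ ∧ ∀ i j, i ≠ j → ∀ x ∈ C i, ∀ y ∈ C j, (δ : ℝ≥0∞) ≤ edist x y := by
  have hpair (i j : ι) :
      ∀ᶠ δ : ℝ≥0 in 𝓝[>] 0, i ≠ j → ∀ x ∈ C i, ∀ y ∈ C j, (δ : ℝ≥0∞) ≤ edist x y := by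
    rcases eq_or_ne i j with hij | hij
    · exact .of_forall fun _ h => absurd hij h
    · obtain ⟨η, hη, hlt⟩ := exists_pos_forall_lt_edist (hC i) (hC j).isClosed (hdisj hij)
      filter_upwards [Ioo_mem_nhdsGT hη] with δ hδ _ x hx y hy
      exact (ENNReal.coe_le_coe.2 hδ.2.le).trans (hlt x hx y hy).le
  obtain ⟨δ, hδ, hδ0⟩ := ((eventually_all.2 fun i => eventually_all.2 (hpair i)).and
    self_mem_nhdsWithin).exists
  exact ⟨δ, hδ0, hδ⟩

variable {ι X : Type*} [Fintype ι] {f : ι → X → X} {r : ι → ℝ≥0} {K : Set X}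

lemma rpow_le_sum_ediam_rpow_of_separated [Nontrivial ι] [PseudoEMetricSpace X] {s : ℝ}
    (hs : 0 ≤ s) {δ : ℝ≥0∞} (hr : ∀ i, 0 < r i) (hf : ∀ i, AntilipschitzWith (r i)⁻¹ (f i))
    (hK : K.Nonempty) (hmaps : ∀ i, MapsTo (f i) K K)
    (hsep : ∀ i j, i ≠ j → ∀ x ∈ f i '' K, ∀ y ∈ f j '' K, δ ≤ edist x y)
    (hsum : 1 ≤ ∑ i, r i ^ s) {α : Type*} (J : Finset α) (A : α → Set X)
    (hcover : K ⊆ ⋃ j ∈ J, A j) :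
    δ ^ s ≤ ∑ j ∈ J, ediam (A j) ^ s := by
  classical
  induction J using Finset.strongInduction generalizing A with
  | H J ih =>
  by_cases hlarge : ∃ j ∈ J, δ ≤ ediam (A j)
  · obtain ⟨j, hj, hδ⟩ := hlarge
    exact (ENNReal.rpow_le_rpow hδ hs).trans
      (Finset.single_le_sum (f := fun j => ediam (A j) ^ s) (fun _ _ => zero_le) hj)
  push Not at hlarge
  let I (i : ι) : Finset α := {j ∈ J | (A j ∩ f i '' K).Nonempty}
  have hpoint (i : ι) {x : X} (hx : x ∈ K) : ∃ j ∈ I i, f i x ∈ A j := by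
    obtain ⟨j, hj, hxj⟩ := mem_iUnion₂.1 (hcover (hmaps i hx))
    exact ⟨j, Finset.mem_filter.2 ⟨hj, f i x, hxj, mem_image_of_mem _ hx⟩, hxj⟩
  have hdisj : Pairwise (Function.onFun Disjoint I) :=
    pairwise_disjoint_filter_of_ediam_lt hsep hlarge
  have hssubset (i : ι) : I i ⊂ J := by
    obtain ⟨x, hx⟩ := hK
    obtain ⟨i', hi'⟩ := exists_ne i
    obtain ⟨j, hj, -⟩ := hpoint i' hx
    exact (Finset.filter_subset _ _).ssubset_of_mem_notMem (Finset.mem_filter.1 hj).1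
      (Finset.disjoint_left.1 (hdisj hi') hj)
  have hpiece (i : ι) : (r i : ℝ≥0∞) ^ s * δ ^ s ≤ ∑ j ∈ I i, ediam (A j) ^ s := by
    have hcover' : K ⊆ ⋃ j ∈ I i, f i ⁻¹' A j := fun x hx =>
      mem_iUnion₂.2 (by simpa only [mem_preimage, exists_prop] using hpoint i hx)
    refine (mul_le_mul_right (ih _ (hssubset i) _ hcover') _).trans ?_
    rw [Finset.mul_sum]
    exact Finset.sum_le_sum fun j _ => mul_ediam_preimage_rpow_le (hf i) (hr i) _ hs
  calc δ ^ s ≤ (∑ i, r i ^ s : ℝ≥0) * δ ^ s := le_mul_of_one_le_left' (by exact_mod_cast hsum)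
    _ = ∑ i, (r i : ℝ≥0∞) ^ s * δ ^ s := by
        simp only [ENNReal.ofNNReal_finsetSum, Finset.sum_mul, ENNReal.coe_rpow_of_nonneg _ hs]
    _ ≤ ∑ i, ∑ j ∈ I i, ediam (A j) ^ s := Finset.sum_le_sum fun i _ => hpiece i
    _ = ∑ j ∈ Finset.univ.biUnion I, ediam (A j) ^ s :=
        (Finset.sum_biUnion fun i _ i' _ => @hdisj i i').symm
    _ ≤ ∑ j ∈ J, ediam (A j) ^ s :=
        Finset.sum_le_sum_of_subset (Finset.biUnion_subset.2 fun i _ => (hssubset i).subset)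

theorem le_dimH_of_pairwise_disjoint_image [Nontrivial ι] [EMetricSpace X]
    (hr : ∀ i, 0 < r i) (hcont : ∀ i, Continuous (f i))
    (hf : ∀ i, AntilipschitzWith (r i)⁻¹ (f i)) (hK : IsCompact K) (hne : K.Nonempty)
    (hmaps : ∀ i, MapsTo (f i) K K) (hdisj : Pairwise (Function.onFun Disjoint fun i => f i '' K))
    {s : ℝ≥0} (hsum : 1 ≤ ∑ i, r i ^ (s : ℝ)) :
    s ≤ dimH K := by
  rcases eq_zero_or_pos s with rfl | hs
  · exact zero_le
  borelize X
  obtain ⟨δ, hδ, hsep⟩ :=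
    exists_pos_forall_le_edist_of_pairwise_disjoint (fun i => hK.image (hcont i)) hdisj
  have hmeasure : (δ : ℝ≥0∞) ^ (s : ℝ) ≤ μH[s] K :=
    le_hausdorffMeasure_of_forall_finset_cover hK hs
      (rpow_le_sum_ediam_rpow_of_separated s.coe_nonneg hr hf hne hmaps hsep hsum)
  exact le_dimH_of_hausdorffMeasure_ne_zero
    ((ENNReal.rpow_pos (ENNReal.coe_pos.2 hδ) ENNReal.coe_ne_top).trans_le hmeasure).ne'

end LowerBound

section OpenSetCondition

variable {ι X : Type*}

/-- The open set condition of Moran and Hutchinson for the iterated function system `f`, witnessed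
by the open set `U`. -/
structure OpenSetCondition [TopologicalSpace X] (f : ι → X → X) (U : Set X) : Prop where
  isOpen : IsOpen U
  mapsTo (i : ι) : MapsTo (f i) U U
  pairwise_disjoint : Pairwise (Function.onFun Disjoint fun i => f i '' U)

variable [Fintype ι] {f : ι → X → X} {r : ι → ℝ≥0}

lemma one_lt_sum_rpow_of_lt (hr0 : ∀ i, 0 < r i) (hr1 : ∀ i, r i < 1) {s t : ℝ}
    (hs : 1 ≤ ∑ i, r i ^ s) (hts : t < s) : 1 < ∑ i, r i ^ t :=
  hs.trans_lt (Finset.sum_lt_sum_of_nonempty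
    (Finset.nonempty_of_sum_ne_zero (one_pos.trans_le hs).ne') fun i _ =>
      NNReal.rpow_lt_rpow_of_exponent_gt (hr0 i) (hr1 i) hts)

lemma nontrivial_of_one_lt_sum_rpow (hr : ∀ i, r i ≤ 1) {t : ℝ} (ht : 0 ≤ t)
    (hsum : 1 < ∑ i, r i ^ t) : Nontrivial ι := by
  refine Fintype.one_lt_card_iff_nontrivial.1 (Nat.one_lt_cast (α := ℝ≥0).1 (hsum.trans_le ?_))
  simpa only [Finset.card_univ, nsmul_eq_mul, mul_one] using
    Finset.sum_le_card_nsmul Finset.univ _ 1 fun i _ => NNReal.rpow_le_one (hr i) ht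

lemma exists_one_le_sum_prod_mul_rpow {t : ℝ} (hr : 1 < ∑ i, r i ^ t) {c : ℝ≥0} (hc : 0 < c) :
    ∃ n : ℕ, 1 ≤ ∑ w : Fin (n + 1) → ι, ((∏ k, r (w k)) * c) ^ t := by
  obtain ⟨n, hn⟩ := pow_unbounded_of_one_lt (c ^ t)⁻¹ hr
  refine ⟨n, ?_⟩
  calc 1 = (c ^ t)⁻¹ * c ^ t := (inv_mul_cancel₀ (NNReal.rpow_pos hc).ne').symm
    _ ≤ (∑ i, r i ^ t) ^ (n + 1) * c ^ t := by
        gcongr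
        exact hn.le.trans (pow_le_pow_right₀ hr.le n.le_succ)
    _ = ∑ w : Fin (n + 1) → ι, ((∏ k, r (w k)) * c) ^ t := by
        simp only [Fintype.sum_pow, Finset.sum_mul, NNReal.mul_rpow, NNReal.finsetProd_rpow]

theorem le_dimH_of_openSetCondition [MetricSpace X] {K U : Set X}
    (hr0 : ∀ i, 0 < r i) (hr1 : ∀ i, r i < 1) (hlip : ∀ i, LipschitzWith (r i) (f i))
    (hanti : ∀ i, AntilipschitzWith (r i)⁻¹ (f i)) (hK : IsCompact K) (hKf : ⋃ i, f i '' K = K)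
    (hU : OpenSetCondition f U) (hKU : (K ∩ U).Nonempty) {s : ℝ≥0}
    (hsum : 1 ≤ ∑ i, r i ^ (s : ℝ)) :
    s ≤ dimH K := by
  obtain ⟨x, hxK, hxU⟩ := hKU
  obtain ⟨m, v, hvU⟩ := exists_wordMap_image_subset hlip hr1 hK.isBounded.ediam_ne_top hKf hxK
    (hU.isOpen.mem_nhds hxU)
  have hmaps (i : ι) : MapsTo (f i) K K :=
    mapsTo_iff_image_subset.2 ((subset_iUnion (fun i => f i '' K) i).trans hKf.subset)
  refine ENNReal.le_of_forall_nnreal_lt fun t hts => ?_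
  have hone : 1 < ∑ i, r i ^ (t : ℝ) := one_lt_sum_rpow_of_lt hr0 hr1 hsum (by exact_mod_cast hts)
  have := nontrivial_of_one_lt_sum_rpow (fun i => (hr1 i).le) t.coe_nonneg hone
  obtain ⟨n, hn⟩ := exists_one_le_sum_prod_mul_rpow hone (Finset.prod_pos fun k _ => hr0 (v k))
  -- Appending `v` costs only a constant factor in the ratios, which the choice of `n` absorbs.
  refine le_dimH_of_pairwise_disjoint_image (f := fun w : Fin (n + 1) → ι =>
      wordMap f w ∘ wordMap f v) (fun w => mul_pos (Finset.prod_pos fun k _ => hr0 _)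
      (Finset.prod_pos fun k _ => hr0 _))
    (fun w => ((lipschitzWith_wordMap hlip w).comp (lipschitzWith_wordMap hlip v)).continuous)
    (fun w => ?_) hK ⟨x, hxK⟩ (fun w => (mapsTo_wordMap hmaps w).comp (mapsTo_wordMap hmaps v))
    (fun w w' hww' => ?_) hn
  · simpa only [mul_inv, mul_comm] using
      (antilipschitzWith_wordMap hanti w).comp (antilipschitzWith_wordMap hanti v)
  · simp only [Function.onFun, image_comp]
    exact (pairwise_disjoint_wordMap_image (fun i => (hanti i).injective) hU.mapsTo
      hU.pairwise_disjoint _ hww').mono (image_mono hvU) (image_mono hvU)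

theorem dimH_eq_of_openSetCondition [MetricSpace X] {K U : Set X}
    (hr0 : ∀ i, 0 < r i) (hr1 : ∀ i, r i < 1)
    (hf : ∀ i x y, dist (f i x) (f i y) = r i * dist x y) (hK : IsCompact K)
    (hKf : ⋃ i, f i '' K = K) (hU : OpenSetCondition f U) (hKU : (K ∩ U).Nonempty) {s : ℝ≥0}
    (hsum : ∑ i, r i ^ (s : ℝ) = 1) :
    dimH K = s := by
  have hlip (i : ι) : LipschitzWith (r i) (f i) := .of_dist_le_mul fun x y => (hf i x y).le
  have hanti (i : ι) : AntilipschitzWith (r i)⁻¹ (f i) := .of_le_mul_dist fun x y => by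
    rw [hf, NNReal.coe_inv, inv_mul_cancel_left₀ (NNReal.coe_pos.2 (hr0 i)).ne']
  exact le_antisymm
    (dimH_le_of_sum_rpow_le_one hlip hr1 hK.isBounded.ediam_ne_top hKf hsum.le)
    (le_dimH_of_openSetCondition hr0 hr1 hlip hanti hK hKf hU hKU hsum.ge)

end OpenSetCondition

section Koch

lemma zero_mem_of_mapsTo_smul {E : Type*} [SeminormedAddCommGroup E] [NormedSpace ℝ E] {K : Set E}
    (hK : IsClosed K) (hne : K.Nonempty) {c : ℝ} (hc0 : 0 ≤ c) (hc1 : c < 1)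
    (hmaps : MapsTo (c • ·) K K) : (0 : E) ∈ K := by
  obtain ⟨x, hx⟩ := hne
  have hlim : Tendsto (fun n : ℕ => c ^ n • x) atTop (𝓝 0) := by
    simpa only [zero_smul] using (tendsto_pow_atTop_nhds_zero_of_lt_one hc0 hc1).smul_const x
  refine hK.mem_of_tendsto hlim (.of_forall fun n => ?_)
  simpa only [smul_iterate] using hmaps.iterate n hx

@[simp] lemma pt_apply_zero (a b : ℝ) : pt a b 0 = a := rfl

@[simp] lemma pt_apply_one (a b : ℝ) : pt a b 1 = b := rfl

lemma dist_rot (τ : ℝ) (x y : Plane) : dist (rot τ x) (rot τ y) = dist x y := by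
  simp only [EuclideanSpace.dist_eq, Fin.sum_univ_two, Real.dist_eq, sq_abs, rot, pt_apply_zero,
    pt_apply_one]
  congr 1
  linear_combination ((x 0 - y 0) ^ 2 + (x 1 - y 1) ^ 2) * Real.sin_sq_add_cos_sq τ

lemma dist_kochF (l : ℝ) (i : Fin 4) (x y : Plane) :
    dist (kochF l i x) (kochF l i y) = |l| * dist x y := by
  fin_cases i <;>
    simp [kochF, dist_rot, dist_smul₀]

variable {l : ℝ}

lemma mul_cos_kochAngle (hl : 1 / 4 ≤ l) : l * Real.cos (kochAngle l) = 1 / 2 - l := by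
  have hl0 : 0 < l := by linarith
  rw [kochAngle, Real.cos_arccos, mul_div_cancel₀ _ hl0.ne']
  · rw [le_div_iff₀ hl0]
    linarith
  · rw [div_le_one hl0]
    linarith

lemma mul_sin_kochAngle (hl : 0 < l) : l * Real.sin (kochAngle l) = √(l - 1 / 4) := by
  rw [kochAngle, Real.sin_arccos, ← Real.sqrt_sq hl.le, ← Real.sqrt_mul (sq_nonneg l),
    Real.sqrt_sq hl.le]
  congr 1
  field_simp
  ring

/-- The barycentric coordinates of `x` in the isosceles triangle with vertices `(0, 0)`, `(1, 0)`
and `(1/2, h)`, where `h = √(l - 1/4)`. They are scaled so as to have sum `2 * h`, which avoids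
a division by `h`. -/
def kochWeight (l : ℝ) (x : Plane) : Fin 3 → ℝ :=
  ![2 * √(l - 1 / 4) * (1 - x 0) - x 1, 2 * √(l - 1 / 4) * x 0 - x 1, 2 * x 1]

lemma sum_kochWeight (l : ℝ) (x : Plane) : ∑ k, kochWeight l x k = 2 * √(l - 1 / 4) := by
  simp only [kochWeight, Fin.sum_univ_three, Matrix.cons_val]
  ring

lemma kochF_one_eq (hl : 1 / 4 ≤ l) (x : Plane) :
    kochF l 1 x = pt ((1 / 2 - l) * x 0 - √(l - 1 / 4) * x 1 + l)
      (√(l - 1 / 4) * x 0 + (1 / 2 - l) * x 1) := by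
  change rot (kochAngle l) (l • x) + pt l 0 = _
  rw [← mul_cos_kochAngle hl, ← mul_sin_kochAngle (by linarith : 0 < l)]
  ext k
  fin_cases k <;> simp [rot] <;> ring

lemma kochF_two_eq (hl : 1 / 4 ≤ l) (x : Plane) :
    kochF l 2 x = pt ((1 / 2 - l) * x 0 + √(l - 1 / 4) * x 1 + 1 / 2)
      (√(l - 1 / 4) * (1 - x 0) + (1 / 2 - l) * x 1) := by
  change rot (-kochAngle l) (l • x) + pt (1 / 2) √(l - 1 / 4) = _
  rw [← mul_cos_kochAngle hl, ← mul_sin_kochAngle (by linarith : 0 < l)]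
  ext k
  fin_cases k <;> simp [rot] <;> ring

lemma kochWeight_kochF_zero (l : ℝ) (x : Plane) :
    kochWeight l (kochF l 0 x) =
      ![2 * √(l - 1 / 4) * (1 - l) + l * kochWeight l x 0, l * kochWeight l x 1,
        l * kochWeight l x 2] := by
  ext k
  fin_cases k <;> simp [kochWeight, kochF] <;> ring

lemma kochWeight_kochF_one (hl : 1 / 4 ≤ l) (x : Plane) :
    kochWeight l (kochF l 1 x) =
      ![(1 - l) * kochWeight l x 0 + l * kochWeight l x 2, l * kochWeight l x 0,
        kochWeight l x 1 + (1 - l) * kochWeight l x 2] := by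
  have hh : √(l - 1 / 4) ^ 2 = l - 1 / 4 := Real.sq_sqrt (by linarith)
  simp only [kochWeight, kochF_one_eq hl, pt_apply_zero, pt_apply_one, Matrix.cons_val,
    Matrix.vecCons_inj, and_true]
  refine ⟨?_, ?_, ?_⟩
  · linear_combination 2 * x 1 * hh
  · linear_combination -2 * x 1 * hh
  · ring

lemma kochWeight_kochF_two (hl : 1 / 4 ≤ l) (x : Plane) :
    kochWeight l (kochF l 2 x) =
      ![l * kochWeight l x 1, (1 - l) * kochWeight l x 1 + l * kochWeight l x 2,
        kochWeight l x 0 + (1 - l) * kochWeight l x 2] := by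
  have hh : √(l - 1 / 4) ^ 2 = l - 1 / 4 := Real.sq_sqrt (by linarith)
  simp only [kochWeight, kochF_two_eq hl, pt_apply_zero, pt_apply_one, Matrix.cons_val,
    Matrix.vecCons_inj, and_true]
  refine ⟨?_, ?_, ?_⟩
  · linear_combination -2 * x 1 * hh
  · linear_combination 2 * x 1 * hh
  · ring

lemma kochWeight_kochF_three (l : ℝ) (x : Plane) :
    kochWeight l (kochF l 3 x) =
      ![l * kochWeight l x 0, 2 * √(l - 1 / 4) * (1 - l) + l * kochWeight l x 1,
        l * kochWeight l x 2] := by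
  ext k
  fin_cases k <;> simp [kochWeight, kochF] <;> ring

/-- The open triangle with vertices `(0, 0)`, `(1, 0)` and `(1/2, h)`, where `h = √(l - 1/4)`; it
witnesses the open set condition for the von Koch maps. -/
def kochTriangle (l : ℝ) : Set Plane := {x | ∀ k, 0 < kochWeight l x k}

lemma mem_kochTriangle {x : Plane} : x ∈ kochTriangle l ↔
    0 < kochWeight l x 0 ∧ 0 < kochWeight l x 1 ∧ 0 < kochWeight l x 2 := by
  simp only [kochTriangle, mem_ofPred_eq, Fin.forall_fin_succ, Fin.succ_zero_eq_one,
    Fin.succ_one_eq_two, IsEmpty.forall_iff, and_true]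

lemma isOpen_kochTriangle (l : ℝ) : IsOpen (kochTriangle l) := by
  simp only [kochTriangle, ofPred_forall]
  refine isOpen_iInter_of_finite fun k => isOpen_lt continuous_const ?_
  fin_cases k <;> simp only [kochWeight] <;> fun_prop

lemma mapsTo_kochF_kochTriangle (hl1 : 1 / 4 < l) (hl2 : l < 1) (i : Fin 4) :
    MapsTo (kochF l i) (kochTriangle l) (kochTriangle l) := by
  intro x hx
  have : 0 < √(l - 1 / 4) := Real.sqrt_pos.2 (by linarith)
  have : 0 < l := by linarith
  have : 0 < 1 - l := by linarith
  rw [mem_kochTriangle] at hx ⊢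
  obtain ⟨h0, h1, h2⟩ := hx
  fin_cases i <;>
    simp only [Fin.zero_eta, Fin.mk_one, Fin.reduceFinMk, kochWeight_kochF_zero,
      kochWeight_kochF_one hl1.le, kochWeight_kochF_two hl1.le, kochWeight_kochF_three,
      Matrix.cons_val] <;>
    exact ⟨by positivity, by positivity, by positivity⟩

/-- Four disjoint regions of the plane separating the images of the triangle under the von Koch
maps. They are cut out by the axis of symmetry of the triangle and, on either side of it, by
the line parallel to the opposite leg that passes through `(l, 0)`, respectively `(1 - l, 0)`. -/
def kochRegion (l : ℝ) : Fin 4 → Set Plane :=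
  ![{x | kochWeight l x 1 < kochWeight l x 0 ∧
      kochWeight l x 1 + kochWeight l x 2 < 2 * √(l - 1 / 4) * l},
    {x | kochWeight l x 1 < kochWeight l x 0 ∧
      2 * √(l - 1 / 4) * l < kochWeight l x 1 + kochWeight l x 2},
    {x | kochWeight l x 0 < kochWeight l x 1 ∧
      2 * √(l - 1 / 4) * l < kochWeight l x 0 + kochWeight l x 2},
    {x | kochWeight l x 0 < kochWeight l x 1 ∧
      kochWeight l x 0 + kochWeight l x 2 < 2 * √(l - 1 / 4) * l}]

lemma pairwise_disjoint_kochRegion (l : ℝ) :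
    Pairwise (Function.onFun Disjoint (kochRegion l)) := by
  intro i j hij
  refine disjoint_left.2 fun x hi hj => ?_
  fin_cases i <;> fin_cases j <;>
    first
      | exact hij rfl
      | exact lt_asymm hi.1 hj.1
      | exact lt_asymm hi.2 hj.2

lemma mapsTo_kochF_kochRegion (hl1 : 1 / 4 ≤ l) (hl2 : l < 1 / 2) (i : Fin 4) :
    MapsTo (kochF l i) (kochTriangle l) (kochRegion l i) := by
  intro x hx
  have hsum := sum_kochWeight l x
  rw [Fin.sum_univ_three] at hsum
  obtain ⟨h0, h1, h2⟩ := mem_kochTriangle.1 hx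
  have hl0 : 0 < l := by linarith
  fin_cases i <;>
    simp only [Fin.zero_eta, Fin.mk_one, Fin.reduceFinMk, kochRegion, mem_ofPred_eq,
      kochWeight_kochF_zero, kochWeight_kochF_one hl1, kochWeight_kochF_two hl1,
      kochWeight_kochF_three, Matrix.cons_val, ← hsum] <;>
    constructor <;> nlinarith [mul_pos hl0 h0, mul_pos hl0 h1, mul_pos hl0 h2]

lemma openSetCondition_kochF (hl1 : 1 / 4 < l) (hl2 : l < 1 / 2) :
    OpenSetCondition (kochF l) (kochTriangle l) where
  isOpen := isOpen_kochTriangle l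
  mapsTo := mapsTo_kochF_kochTriangle hl1 (by linarith)
  pairwise_disjoint _ _ hij := (pairwise_disjoint_kochRegion l hij).mono
    (mapsTo_kochF_kochRegion hl1.le hl2 _).image_subset
    (mapsTo_kochF_kochRegion hl1.le hl2 _).image_subset

lemma kochF_one_kochF_one_zero_mem_kochTriangle (hl1 : 1 / 4 < l) (hl2 : l < 1) :
    kochF l 1 (kochF l 1 0) ∈ kochTriangle l := by
  have : 0 < √(l - 1 / 4) := Real.sqrt_pos.2 (by linarith)
  have : 0 < l := by linarith
  have : 0 < 1 - l := by linarith
  have hzero : kochWeight l 0 = ![2 * √(l - 1 / 4), 0, 0] := by simp [kochWeight]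
  simp only [mem_kochTriangle, kochWeight_kochF_one hl1.le, hzero, Matrix.cons_val]
  exact ⟨by positivity, by positivity, by positivity⟩

theorem dimH_eq_of_iUnion_kochF_image_eq (hl1 : 1 / 4 < l) (hl2 : l < 1 / 2) {K : Set Plane}
    (hne : K.Nonempty) (hK : IsCompact K) (hKf : ⋃ i, kochF l i '' K = K) {s : ℝ≥0}
    (hs : 4 * l ^ (s : ℝ) = 1) :
    dimH K = s := by
  have hl0 : 0 < l := by linarith
  lift l to ℝ≥0 using hl0.le
  have hmaps (i : Fin 4) : MapsTo (kochF l i) K K :=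
    mapsTo_iff_image_subset.2 ((subset_iUnion (fun i => kochF l i '' K) i).trans hKf.subset)
  have hzero : 0 ∈ K := zero_mem_of_mapsTo_smul hK.isClosed hne hl0.le (by linarith) (hmaps 0)
  refine dimH_eq_of_openSetCondition (r := fun _ => l) (fun _ => by exact_mod_cast hl0)
    (fun _ => ?_) (fun i x y => ?_) hK hKf (openSetCondition_kochF hl1 hl2)
    ⟨_, hmaps 1 (hmaps 1 hzero), kochF_one_kochF_one_zero_mem_kochTriangle hl1 (by linarith)⟩ ?_
  · exact_mod_cast hl2.trans one_half_lt_one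
  · rw [dist_kochF, abs_of_pos hl0]
  · rw [Fin.sum_const, nsmul_eq_mul]
    exact_mod_cast hs

lemma mul_rpow_neg_log_div_log {a b : ℝ} (ha : 0 < a) (hb0 : 0 < b) (hb1 : b ≠ 1) :
    a * b ^ (-Real.log a / Real.log b) = 1 := by
  rw [neg_div, Real.rpow_neg hb0.le, ← Real.logb, Real.rpow_logb hb0 hb1 ha, mul_inv_cancel₀ ha.ne']

/-- The left-hand side is the tangent line of the right-hand side at `l = 1 / 2`. -/
lemma tangent_le_neg_log_four_div_log (hl0 : 0 < l) (hl1 : l < 1) :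
    2 - 4 / Real.log 2 * (1 / 2 - l) ≤ -Real.log 4 / Real.log l := by
  have : 0 < Real.log 2 := Real.log_pos one_lt_two
  have hlog2 : Real.log 2 < 1 := by linarith [Real.log_two_lt_d9]
  have hlog4 : Real.log 4 = 2 * Real.log 2 := by
    rw [show (4 : ℝ) = 2 ^ 2 by norm_num, Real.log_pow, Nat.cast_ofNat]
  have hneg : 0 < -Real.log l := neg_pos.2 (Real.log_neg hl0 hl1)
  have hbound : -Real.log l ≤ Real.log 2 + (2 * l)⁻¹ - 1 := by
    have hlog := Real.one_sub_inv_le_log_of_pos (mul_pos two_pos hl0)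
    rw [Real.log_mul two_ne_zero hl0.ne'] at hlog
    linarith
  calc 2 - 4 / Real.log 2 * (1 / 2 - l)
      ≤ 2 * Real.log 2 / (Real.log 2 + (2 * l)⁻¹ - 1) := by
        rw [le_div_iff₀ (hneg.trans_le hbound), ← sub_nonneg]
        have hgap : 2 * Real.log 2 -
            (2 - 4 / Real.log 2 * (1 / 2 - l)) * (Real.log 2 + (2 * l)⁻¹ - 1) =
            (1 - 2 * l) ^ 2 * (1 - Real.log 2) / (l * Real.log 2) := by
          field_simp
          ring
        rw [hgap]
        exact div_nonneg (mul_nonneg (sq_nonneg _) (by linarith)) (by positivity)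
    _ ≤ 2 * Real.log 2 / -Real.log l := by gcongr
    _ = -Real.log 4 / Real.log l := by rw [hlog4, div_neg, neg_div]

theorem koch_dimH_general (l : ℝ) (hl1 : 1 / 4 < l) (hl2 : l < 1 / 2)
    (K : Set Plane) (hne : K.Nonempty) (hcomp : IsCompact K)
    (hK : K = kochF l 0 '' K ∪ kochF l 1 '' K ∪ kochF l 2 '' K ∪ kochF l 3 '' K) :
    dimH K = ENNReal.ofReal (-Real.log 4 / Real.log l) ∧
      2 - 4 / Real.log 2 * (1 / 2 - l) ≤ -Real.log 4 / Real.log l := by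
  have hl0 : 0 < l := by linarith
  have hl : l < 1 := by linarith
  refine ⟨dimH_eq_of_iUnion_kochF_image_eq hl1 hl2 hne hcomp ?_ ?_,
    tangent_le_neg_log_four_div_log hl0 hl⟩
  · ext x
    conv_rhs => rw [hK]
    simp only [mem_iUnion, mem_union, Fin.exists_fin_succ, Fin.succ_zero_eq_one,
      Fin.succ_one_eq_two, IsEmpty.exists_iff, or_false, or_assoc, Fin.reduceSucc]
  · rw [Real.coe_toNNReal _ (div_nonneg_of_nonpos (neg_nonpos.2 (Real.log_nonneg (by norm_num)))
      (Real.log_neg hl0 hl).le)]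
    exact mul_rpow_neg_log_div_log four_pos hl0 hl.ne

end Koch

/-- **Dimension of the von Koch curve.** For `λ ∈ [1/3, 1/2)`, the attractor `K` of the
von Koch iterated function system with parameter `λ` has Hausdorff dimension
`-log 4 / log λ`, and `-log 4 / log λ ≥ 2 - (4/log 2)·(1/2 - λ)`. -/
theorem koch_dimH (l : ℝ) (hl1 : 1/3 ≤ l) (hl2 : l < 1/2)
    (K : Set Plane) (hne : K.Nonempty) (hcomp : IsCompact K)
    (hK : K = kochF l 0 '' K ∪ kochF l 1 '' K ∪ kochF l 2 '' K ∪ kochF l 3 '' K) :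
    dimH K = ENNReal.ofReal (-Real.log 4 / Real.log l) ∧
      2 - 4 / Real.log 2 * (1/2 - l) ≤ -Real.log 4 / Real.log l := by
  exact koch_dimH_general l (by linarith) hl2 K hne hcomp hK
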